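/- Let N ≥ 1 and s ∈ (0,1) with N > 2s, and let Φ : (−1/2, 1/2) × ℝ^N → ℝ^N, written Φ_t(x) := Φ(t,x), satisfy: Φ_0 = id; there is c ≥ 1 with c⁻¹|u−v| ≤ |Φ_t(u) − Φ_t(v)| ≤ c|u−v| for all t, u, v; for each x the map t ↦ Φ_t(x) is differentiable with derivative V_t(x) := ∂_tΦ_t(x) continuous in t; and there is C₀ > 0 such that for all t the map V_t is differentiable in x with |V_t(u) − V_t(v)| ≤ C₀|u−v|, ‖D_xV_t(u)‖ ≤ C₀ and ‖D_xV_t(u) − D_xV_t(v)‖ ≤ C₀|u−v| for all u, v. Let Ω ⊂ ℝ^N be a bounded open set, x ∈ Ω, and for t ≠ 0 define g^t_x(y) := b_{N,s} · ( |Φ_t(x) − Φ_t(y)|^{2s−N} − |x−y|^{2s−N} ) / t. Then: (i) there exists C > 0 such that |g^t_x(y)| ≤ C|x−y|^{2s−N} for all y ≠ x and all t ≠ 0 in (−1/2,1/2); and (ii) for every α ∈ (0,1) there exist C₀' > 0 and t₀ ∈ (0,1/2) such that for all t with 0 < |t| < t₀, all y ∈ ∂Ω and all z ∈ ℝ^N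 \ Ω with z ≠ y: |g^t_x(y)| + |g^t_x(y) − g^t_x(z)| / |y−z|^α ≤ C₀'. -/

import Mathlib

/-!
Set `p = 2s - N < 0`. Since `Φ_0 = id`, `g^t_x(y)` is `b_{N,s}` times the difference quotient at
`0` of `τ ↦ |w|^p`, where `w = Φ_τ(x) - Φ_τ(y)` has `τ`-derivative `v = V_τ(x) - V_τ(y)`. By the
mean value inequality it suffices to bound the derivative `p |w|^{p-2} ⟪w, v⟫` uniformly in `τ`.
The Lipschitz bounds give `|v| ≤ κ |w|`, hence `|p| κ |w|^p` as a bound for the derivative, which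
is (i).

For (ii), let `w'`, `v'` belong to a second point `z`, with `|w| ≤ |w'|`. The field
`w ↦ |w|^{p-2} w` has Lipschitz constant of order `|w|^{p-2}` outside the ball of radius `|w|`, so
the two derivatives differ by at most a multiple of `|w|^{p-2} |w - w'| |v| + |w'|^{p-1} |v - v'|`.
Again by `|v| ≤ κ |w|`, this is at most a multiple of `|w|^{p-1} |y - z|`, and `|w|` is bounded
below when `y` and `z` stay away from `x`. Together with the bound of (i) this is a bound by a
multiple of `min(1, |y - z|) ≤ |y - z|^α`.
-/

noncomputable section

/-- The constant `b_{N,s} = π^{-N/2} 4^{-s} Γ((N-2s)/2) / Γ(s)` of the fundamental solution. -/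
def bNs (N : ℕ) (s : ℝ) : ℝ :=
  Real.pi ^ (-(N : ℝ) / 2) * (4 : ℝ) ^ (-s) *
    Real.Gamma (((N : ℝ) - 2 * s) / 2) / Real.Gamma s

/-- The difference quotient `g^t_x(y) = b_{N,s} (|Φ_t(x)-Φ_t(y)|^{2s-N} - |x-y|^{2s-N})/t`. -/
def gtx (N : ℕ) (s : ℝ)
    (Φ : ℝ → EuclideanSpace ℝ (Fin N) → EuclideanSpace ℝ (Fin N))
    (t : ℝ) (x y : EuclideanSpace ℝ (Fin N)) : ℝ :=
  bNs N s * ((‖Φ t x - Φ t y‖ ^ (2 * s - (N : ℝ)) - ‖x - y‖ ^ (2 * s - (N : ℝ))) / t)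

lemma le_max_mul_rpow {a d M L α : ℝ} (hd : 0 < d) (hM : 0 ≤ M) (haM : a ≤ M) (haL : a ≤ L * d)
    (hα : α ∈ Set.Icc (0 : ℝ) 1) : a ≤ max M L * d ^ α := by
  have hmax : 0 ≤ max M L := hM.trans (le_max_left M L)
  rcases le_total 1 d with h1d | hd1
  · calc a ≤ max M L := haM.trans (le_max_left M L)
      _ ≤ max M L * d ^ α := le_mul_of_one_le_right hmax (Real.one_le_rpow h1d hα.1)
  · calc a ≤ max M L * d := haL.trans (by gcongr; exact le_max_right M L)
      _ ≤ max M L * d ^ α := by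
        gcongr
        exact Real.self_le_rpow_of_le_one hd.le hd1 hα.2

lemma abs_slope_le_of_hasDerivWithinAt {I : Set ℝ} (hI : Convex ℝ I) {f f' : ℝ → ℝ} {K a t : ℝ}
    (hf : ∀ τ ∈ I, HasDerivWithinAt f (f' τ) I τ) (hK : ∀ τ ∈ I, |f' τ| ≤ K)
    (ha : a ∈ I) (ht : t ∈ I) (hta : t ≠ a) : |slope f a t| ≤ K := by
  rw [slope_def_field, abs_div, div_le_iff₀ (abs_pos.2 (sub_ne_zero.2 hta))]
  exact hI.norm_image_sub_le_of_norm_hasDerivWithin_le hf hK ha ht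

lemma abs_rpow_sub_rpow_le {q a b : ℝ} (hq : q ≤ 1) (ha : 0 < a) (hab : a ≤ b) :
    |a ^ q - b ^ q| ≤ |q| * a ^ (q - 1) * |a - b| := by
  refine (convex_Ici a).norm_image_sub_le_of_norm_hasDerivWithin_le
    (fun u hu => (Real.hasDerivAt_rpow_const (Or.inl (ha.trans_le hu).ne')).hasDerivWithinAt)
    (fun u hu => ?_) hab Set.self_mem_Ici
  have hu0 : 0 < u := ha.trans_le hu
  rw [Real.norm_eq_abs, abs_mul, abs_of_pos (Real.rpow_pos_of_pos hu0 _)]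
  gcongr |q| * ?_
  exact Real.rpow_le_rpow_of_nonpos ha hu (by linarith)

lemma norm_rpow_smul_sub_rpow_smul_le {F : Type*} [NormedAddCommGroup F] [NormedSpace ℝ F] {q : ℝ}
    (hq : q ≤ 0) {w w' : F} (hw : 0 < ‖w‖) (hww' : ‖w‖ ≤ ‖w'‖) :
    ‖‖w‖ ^ q • w - ‖w'‖ ^ q • w'‖ ≤ (1 - q) * ‖w‖ ^ q * ‖w - w'‖ := by
  have hcoeff : |‖w‖ ^ q - ‖w'‖ ^ q| ≤ -q * ‖w‖ ^ (q - 1) * ‖w - w'‖ := by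
    rw [← abs_of_nonpos hq]
    refine (abs_rpow_sub_rpow_le (by linarith) hw hww').trans ?_
    gcongr
    exact abs_norm_sub_norm_le w w'
  calc ‖‖w‖ ^ q • w - ‖w'‖ ^ q • w'‖
      = ‖‖w'‖ ^ q • (w - w') + (‖w‖ ^ q - ‖w'‖ ^ q) • w‖ := by congr 1; module
    _ ≤ ‖w'‖ ^ q * ‖w - w'‖ + |‖w‖ ^ q - ‖w'‖ ^ q| * ‖w‖ := by
      refine (norm_add_le _ _).trans_eq ?_
      rw [norm_smul, norm_smul, Real.norm_eq_abs, Real.norm_eq_abs,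
        abs_of_nonneg (by positivity : 0 ≤ ‖w'‖ ^ q)]
    _ ≤ ‖w‖ ^ q * ‖w - w'‖ + -q * ‖w‖ ^ (q - 1) * ‖w - w'‖ * ‖w‖ := by
      gcongr ?_ * _ + ?_ * _
      exact Real.rpow_le_rpow_of_nonpos hw hww' hq
    _ = (1 - q) * ‖w‖ ^ q * ‖w - w'‖ := by
      rw [Real.rpow_sub_one hw.ne']
      field_simp
      ring

section InnerProductSpace

variable {E : Type*} [NormedAddCommGroup E] [InnerProductSpace ℝ E]

/-- The derivative of `w ↦ ‖w‖ ^ p` at `w ≠ 0` in the direction `v`. The power is kept on the vector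
side, so that Lipschitz bounds for the field `w ↦ ‖w‖ ^ (p - 2) • w` apply. -/
def normRpowDeriv (p : ℝ) (w v : E) : ℝ := p * inner ℝ (‖w‖ ^ (p - 2) • w) v

lemma hasDerivWithinAt_norm_rpow (p : ℝ) {f : ℝ → E} {f' : E} {I : Set ℝ} {t : ℝ}
    (hf : HasDerivWithinAt f f' I t) (h0 : f t ≠ 0) :
    HasDerivWithinAt (fun τ => ‖f τ‖ ^ p) (normRpowDeriv p (f t) f') I t := by
  have hsq (a q : ℝ) (ha : 0 ≤ a) : (a ^ 2) ^ (q / 2) = a ^ q := by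
    rw [← Real.rpow_natCast_mul ha]
    congr 1
    push_cast
    ring
  have h := hf.norm_sq.rpow_const (p := p / 2) (Or.inl (by simpa using h0))
  simp only [hsq _ _ (norm_nonneg _), show p / 2 - 1 = (p - 2) / 2 by ring] at h
  convert h using 1
  rw [normRpowDeriv, real_inner_smul_left]
  ring

lemma norm_rpow_sub_two_smul (p : ℝ) {w : E} (hw : 0 < ‖w‖) :
    ‖‖w‖ ^ (p - 2) • w‖ = ‖w‖ ^ (p - 1) := by
  rw [norm_smul, Real.norm_of_nonneg (by positivity), ← Real.rpow_add_one hw.ne']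
  congr 1
  ring

lemma abs_normRpowDeriv_le {p κ : ℝ} {w v : E} (hw : 0 < ‖w‖) (hv : ‖v‖ ≤ κ * ‖w‖) :
    |normRpowDeriv p w v| ≤ |p| * κ * ‖w‖ ^ p := by
  calc |normRpowDeriv p w v| ≤ |p| * (‖w‖ ^ (p - 1) * ‖v‖) := by
        rw [normRpowDeriv, abs_mul, ← norm_rpow_sub_two_smul p hw]
        gcongr
        exact abs_real_inner_le_norm _ _
    _ ≤ |p| * (‖w‖ ^ (p - 1) * (κ * ‖w‖)) := by gcongr
    _ = |p| * κ * ‖w‖ ^ p := by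
        rw [Real.rpow_sub_one hw.ne']
        field_simp

lemma abs_normRpowDeriv_sub_le_of_norm_le {p κ : ℝ} (hp : p ≤ 2) {w v w' v' : E} (hw : 0 < ‖w‖)
    (hww' : ‖w‖ ≤ ‖w'‖) (hv : ‖v‖ ≤ κ * ‖w‖) :
    |normRpowDeriv p w v - normRpowDeriv p w' v'| ≤
      |p| * ((3 - p) * κ * ‖w‖ ^ (p - 1) * ‖w - w'‖ + ‖w'‖ ^ (p - 1) * ‖v - v'‖) := by
  set k : E → E := fun u => ‖u‖ ^ (p - 2) • u with hk
  have hsplit : normRpowDeriv p w v - normRpowDeriv p w' v' =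
      p * (inner ℝ (k w - k w') v + inner ℝ (k w') (v - v')) := by
    simp only [normRpowDeriv, hk, inner_sub_left, inner_sub_right]
    ring
  have hlip : ‖k w - k w'‖ ≤ (1 - (p - 2)) * ‖w‖ ^ (p - 2) * ‖w - w'‖ :=
    norm_rpow_smul_sub_rpow_smul_le (by linarith) hw hww'
  have hfield : |inner ℝ (k w - k w') v| ≤ (3 - p) * κ * ‖w‖ ^ (p - 1) * ‖w - w'‖ :=
    calc |inner ℝ (k w - k w') v| ≤ ‖k w - k w'‖ * ‖v‖ := abs_real_inner_le_norm _ _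
      _ ≤ (1 - (p - 2)) * ‖w‖ ^ (p - 2) * ‖w - w'‖ * (κ * ‖w‖) :=
        mul_le_mul hlip hv (norm_nonneg v) ((norm_nonneg _).trans hlip)
      _ = (3 - p) * κ * (‖w‖ ^ (p - 2) * ‖w‖) * ‖w - w'‖ := by ring
      _ = (3 - p) * κ * ‖w‖ ^ (p - 1) * ‖w - w'‖ := by
        rw [← Real.rpow_add_one hw.ne', show p - 2 + 1 = p - 1 by ring]
  have hdirection : |inner ℝ (k w') (v - v')| ≤ ‖w'‖ ^ (p - 1) * ‖v - v'‖ := by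
    rw [← norm_rpow_sub_two_smul p (hw.trans_le hww')]
    exact abs_real_inner_le_norm _ _
  rw [hsplit, abs_mul]
  gcongr
  exact (abs_add_le _ _).trans (add_le_add hfield hdirection)

lemma abs_normRpowDeriv_sub_le {p κ ρ : ℝ} (hp : p ≤ 1) (hκ : 0 ≤ κ) (hρ : 0 < ρ) {w v w' v' : E}
    (hw : ρ ≤ ‖w‖) (hw' : ρ ≤ ‖w'‖) (hv : ‖v‖ ≤ κ * ‖w‖) (hv' : ‖v'‖ ≤ κ * ‖w'‖) :
    |normRpowDeriv p w v - normRpowDeriv p w' v'| ≤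
      |p| * ρ ^ (p - 1) * ((3 - p) * κ * ‖w - w'‖ + ‖v - v'‖) := by
  wlog hww' : ‖w‖ ≤ ‖w'‖ generalizing w v w' v'
  · rw [abs_sub_comm, norm_sub_rev w, norm_sub_rev v]
    exact this hw' hw hv' hv (le_of_not_ge hww')
  have h3p : 0 ≤ 3 - p := by linarith
  calc |normRpowDeriv p w v - normRpowDeriv p w' v'|
      ≤ |p| * ((3 - p) * κ * ‖w‖ ^ (p - 1) * ‖w - w'‖ + ‖w'‖ ^ (p - 1) * ‖v - v'‖) :=
        abs_normRpowDeriv_sub_le_of_norm_le (by linarith) (hρ.trans_le hw) hww' hv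
    _ ≤ |p| * ((3 - p) * κ * ρ ^ (p - 1) * ‖w - w'‖ + ρ ^ (p - 1) * ‖v - v'‖) := by
        have hanti {r : ℝ} (hr : ρ ≤ r) : r ^ (p - 1) ≤ ρ ^ (p - 1) :=
          Real.rpow_le_rpow_of_nonpos hρ hr (by linarith)
        gcongr |p| * ((3 - p) * κ * ?_ * _ + ?_ * _)
        exacts [hanti hw, hanti hw']
    _ = |p| * ρ ^ (p - 1) * ((3 - p) * κ * ‖w - w'‖ + ‖v - v'‖) := by ring

/-- A deformation `Φ_t` of the identity, `t ∈ I`, that is bi-Lipschitz with constant `c`, uniformly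
in `t`, and whose velocity `V_t = ∂_t Φ_t` is `C₀`-Lipschitz. The velocity is a function of the
starting point `u`, not of the current position `Φ_t(u)`. -/
structure IsBiLipschitzDeformation (I : Set ℝ) (Φ V : ℝ → E → E) (c C₀ : ℝ) : Prop where
  const_pos : 0 < c
  velocity_const_nonneg : 0 ≤ C₀
  map_zero : Φ 0 = id
  le_norm_sub : ∀ t ∈ I, ∀ u v, c⁻¹ * ‖u - v‖ ≤ ‖Φ t u - Φ t v‖
  norm_sub_le : ∀ t ∈ I, ∀ u v, ‖Φ t u - Φ t v‖ ≤ c * ‖u - v‖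
  hasDerivWithinAt : ∀ u, ∀ t ∈ I, HasDerivWithinAt (fun τ => Φ τ u) (V t u) I t
  norm_velocity_sub_le : ∀ t ∈ I, ∀ u v, ‖V t u - V t v‖ ≤ C₀ * ‖u - v‖

/-- The difference quotient in time of `b ‖Φ_t(x) - Φ_t(y)‖ ^ p`, for a deformation with
`Φ_0 = id`. The function `gtx N s` is the case `b = bNs N s`, `p = 2 * s - N`. -/
def rpowDistQuotient (b p : ℝ) (Φ : ℝ → E → E) (t : ℝ) (x y : E) : ℝ :=
  b * ((‖Φ t x - Φ t y‖ ^ p - ‖x - y‖ ^ p) / t)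

namespace IsBiLipschitzDeformation

variable {I : Set ℝ} {Φ V : ℝ → E → E} {c C₀ p t δ : ℝ} {x y z : E}

lemma norm_sub_pos (h : IsBiLipschitzDeformation I Φ V c C₀) (ht : t ∈ I) (hxy : 0 < ‖x - y‖) :
    0 < ‖Φ t x - Φ t y‖ :=
  (mul_pos (inv_pos.2 h.const_pos) hxy).trans_le (h.le_norm_sub t ht x y)

lemma norm_velocity_sub_le_norm_sub (h : IsBiLipschitzDeformation I Φ V c C₀) (ht : t ∈ I)
    (x y : E) : ‖V t x - V t y‖ ≤ C₀ * c * ‖Φ t x - Φ t y‖ := by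
  have hxy : ‖x - y‖ ≤ c * ‖Φ t x - Φ t y‖ :=
    (inv_mul_le_iff₀ h.const_pos).1 (h.le_norm_sub t ht x y)
  calc ‖V t x - V t y‖ ≤ C₀ * ‖x - y‖ := h.norm_velocity_sub_le t ht x y
    _ ≤ C₀ * (c * ‖Φ t x - Φ t y‖) := mul_le_mul_of_nonneg_left hxy h.velocity_const_nonneg
    _ = C₀ * c * ‖Φ t x - Φ t y‖ := (mul_assoc _ _ _).symm

lemma hasDerivWithinAt_norm_sub_rpow (h : IsBiLipschitzDeformation I Φ V c C₀) (ht : t ∈ I)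
    (hxy : 0 < ‖x - y‖) :
    HasDerivWithinAt (fun τ => ‖Φ τ x - Φ τ y‖ ^ p)
      (normRpowDeriv p (Φ t x - Φ t y) (V t x - V t y)) I t :=
  hasDerivWithinAt_norm_rpow p ((h.hasDerivWithinAt x t ht).sub (h.hasDerivWithinAt y t ht))
    (norm_pos_iff.1 (h.norm_sub_pos ht hxy))

protected lemma abs_normRpowDeriv_le (h : IsBiLipschitzDeformation I Φ V c C₀) (hp : p ≤ 0)
    (ht : t ∈ I) (hδ : 0 < δ) (hxy : δ ≤ ‖x - y‖) :
    |normRpowDeriv p (Φ t x - Φ t y) (V t x - V t y)| ≤ |p| * (C₀ * c) * (c⁻¹ * δ) ^ p := by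
  have hc := h.const_pos
  have hC₀ := h.velocity_const_nonneg
  have hρ : c⁻¹ * δ ≤ ‖Φ t x - Φ t y‖ :=
    (mul_le_mul_of_nonneg_left hxy (by positivity)).trans (h.le_norm_sub t ht x y)
  refine (abs_normRpowDeriv_le (h.norm_sub_pos ht (hδ.trans_le hxy))
    (h.norm_velocity_sub_le_norm_sub ht x y)).trans ?_
  gcongr _ * ?_
  exact Real.rpow_le_rpow_of_nonpos (by positivity) hρ hp

protected lemma abs_normRpowDeriv_sub_le (h : IsBiLipschitzDeformation I Φ V c C₀) (hp : p ≤ 1)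
    (ht : t ∈ I) (hδ : 0 < δ) (hxy : δ ≤ ‖x - y‖) (hxz : δ ≤ ‖x - z‖) :
    |normRpowDeriv p (Φ t x - Φ t y) (V t x - V t y) -
        normRpowDeriv p (Φ t x - Φ t z) (V t x - V t z)| ≤
      |p| * (c⁻¹ * δ) ^ (p - 1) * ((3 - p) * (C₀ * c) * c + C₀) * ‖y - z‖ := by
  have hc := h.const_pos
  have hC₀ := h.velocity_const_nonneg
  have h3p : 0 ≤ 3 - p := by linarith
  have hρ {u : E} (hxu : δ ≤ ‖x - u‖) : c⁻¹ * δ ≤ ‖Φ t x - Φ t u‖ :=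
    (mul_le_mul_of_nonneg_left hxu (by positivity)).trans (h.le_norm_sub t ht x u)
  refine (abs_normRpowDeriv_sub_le hp (by positivity) (by positivity) (hρ hxy) (hρ hxz)
    (h.norm_velocity_sub_le_norm_sub ht x y) (h.norm_velocity_sub_le_norm_sub ht x z)).trans ?_
  rw [sub_sub_sub_cancel_left, sub_sub_sub_cancel_left, mul_assoc _ _ ‖y - z‖, add_mul,
    mul_assoc _ c, norm_sub_rev y z]
  gcongr
  exacts [h.norm_sub_le t ht z y, h.norm_velocity_sub_le t ht z y]

lemma rpowDistQuotient_eq_slope (h : IsBiLipschitzDeformation I Φ V c C₀) (b p t : ℝ) (x y : E) :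
    rpowDistQuotient b p Φ t x y = b * slope (fun τ => ‖Φ τ x - Φ τ y‖ ^ p) 0 t := by
  simp only [rpowDistQuotient, slope_def_field, h.map_zero, id_eq, sub_zero]

lemma abs_rpowDistQuotient_le (h : IsBiLipschitzDeformation I Φ V c C₀) (hI : Convex ℝ I)
    (h0 : 0 ∈ I) (hp : p ≤ 0) (ht : t ∈ I) (ht0 : t ≠ 0) (hδ : 0 < δ) (hxy : δ ≤ ‖x - y‖) (b : ℝ) :
    |rpowDistQuotient b p Φ t x y| ≤ |b| * (|p| * (C₀ * c) * (c⁻¹ * δ) ^ p) := by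
  rw [h.rpowDistQuotient_eq_slope, abs_mul]
  gcongr
  exact abs_slope_le_of_hasDerivWithinAt hI
    (fun τ hτ => h.hasDerivWithinAt_norm_sub_rpow hτ (hδ.trans_le hxy))
    (fun τ hτ => h.abs_normRpowDeriv_le hp hτ hδ hxy) h0 ht ht0

lemma abs_rpowDistQuotient_sub_le (h : IsBiLipschitzDeformation I Φ V c C₀) (hI : Convex ℝ I)
    (h0 : 0 ∈ I) (hp : p ≤ 1) (ht : t ∈ I) (ht0 : t ≠ 0) (hδ : 0 < δ) (hxy : δ ≤ ‖x - y‖)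
    (hxz : δ ≤ ‖x - z‖) (b : ℝ) :
    |rpowDistQuotient b p Φ t x y - rpowDistQuotient b p Φ t x z| ≤
      |b| * (|p| * (c⁻¹ * δ) ^ (p - 1) * ((3 - p) * (C₀ * c) * c + C₀)) * ‖y - z‖ := by
  have hslope : rpowDistQuotient b p Φ t x y - rpowDistQuotient b p Φ t x z =
      b * slope (fun τ => ‖Φ τ x - Φ τ y‖ ^ p - ‖Φ τ x - Φ τ z‖ ^ p) 0 t := by
    simp only [h.rpowDistQuotient_eq_slope, slope_def_field]
    ring
  rw [hslope, abs_mul, mul_assoc |b|]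
  gcongr
  exact abs_slope_le_of_hasDerivWithinAt hI
    (fun τ hτ => (h.hasDerivWithinAt_norm_sub_rpow hτ (hδ.trans_le hxy)).sub
      (h.hasDerivWithinAt_norm_sub_rpow hτ (hδ.trans_le hxz)))
    (fun τ hτ => h.abs_normRpowDeriv_sub_le hp hτ hδ hxy hxz) h0 ht ht0

lemma exists_abs_rpowDistQuotient_le_mul_rpow (h : IsBiLipschitzDeformation I Φ V c C₀)
    (hI : Convex ℝ I) (h0 : 0 ∈ I) (hp : p ≤ 0) (b : ℝ) (x : E) :
    ∃ C > 0, ∀ t ∈ I, t ≠ 0 → ∀ y, y ≠ x →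
      |rpowDistQuotient b p Φ t x y| ≤ C * ‖x - y‖ ^ p := by
  have hc := h.const_pos
  have hC₀ := h.velocity_const_nonneg
  refine ⟨|b| * (|p| * (C₀ * c) * c⁻¹ ^ p) + 1, by positivity, fun t ht ht0 y hyx => ?_⟩
  have hxy : 0 < ‖x - y‖ := norm_sub_pos_iff.2 hyx.symm
  calc |rpowDistQuotient b p Φ t x y|
      ≤ |b| * (|p| * (C₀ * c) * (c⁻¹ * ‖x - y‖) ^ p) :=
        h.abs_rpowDistQuotient_le hI h0 hp ht ht0 hxy le_rfl b
    _ = |b| * (|p| * (C₀ * c) * c⁻¹ ^ p) * ‖x - y‖ ^ p := by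
        rw [Real.mul_rpow (by positivity) hxy.le]
        ring
    _ ≤ (|b| * (|p| * (C₀ * c) * c⁻¹ ^ p) + 1) * ‖x - y‖ ^ p := by
        gcongr
        exact le_add_of_nonneg_right zero_le_one

lemma exists_abs_rpowDistQuotient_add_holder_le (h : IsBiLipschitzDeformation I Φ V c C₀)
    (hI : Convex ℝ I) (h0 : 0 ∈ I) (hp : p ≤ 0) (b : ℝ) {Ω : Set E} (hΩ : Ω ∈ nhds x) :
    ∃ C > 0, ∀ α ∈ Set.Icc (0 : ℝ) 1, ∀ t ∈ I, t ≠ 0 → ∀ y ∈ Ωᶜ, ∀ z ∈ Ωᶜ, z ≠ y →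
      |rpowDistQuotient b p Φ t x y| +
        |rpowDistQuotient b p Φ t x y - rpowDistQuotient b p Φ t x z| / ‖y - z‖ ^ α ≤ C := by
  have hc := h.const_pos
  have hC₀ := h.velocity_const_nonneg
  obtain ⟨δ, hδ, hball⟩ := Metric.mem_nhds_iff.1 hΩ
  have hfar {u : E} (hu : u ∈ Ωᶜ) : δ ≤ ‖x - u‖ := by
    rw [← dist_eq_norm, dist_comm]
    exact not_lt.1 fun hlt => hu (hball hlt)
  set M := |b| * (|p| * (C₀ * c) * (c⁻¹ * δ) ^ p)
  set L := |b| * (|p| * (c⁻¹ * δ) ^ (p - 1) * ((3 - p) * (C₀ * c) * c + C₀))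
  have hM : 0 ≤ M := by positivity
  refine ⟨M + max (M + M) L + 1, by positivity, fun α hα t ht ht0 y hy z hz hzy => ?_⟩
  have hd : 0 < ‖y - z‖ := norm_sub_pos_iff.2 hzy.symm
  have hbound {u : E} (hu : u ∈ Ωᶜ) : |rpowDistQuotient b p Φ t x u| ≤ M :=
    h.abs_rpowDistQuotient_le hI h0 hp ht ht0 hδ (hfar hu) b
  have hholder : |rpowDistQuotient b p Φ t x y - rpowDistQuotient b p Φ t x z| ≤
      max (M + M) L * ‖y - z‖ ^ α :=
    le_max_mul_rpow hd (add_nonneg hM hM)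
      ((abs_sub _ _).trans (add_le_add (hbound hy) (hbound hz)))
      (h.abs_rpowDistQuotient_sub_le hI h0 (by linarith) ht ht0 hδ (hfar hy) (hfar hz) b) hα
  have hquot := (div_le_iff₀ (Real.rpow_pos_of_pos hd α)).2 hholder
  linarith [hbound hy]

end IsBiLipschitzDeformation

theorem statement15_general {I : Set ℝ} (hI : Convex ℝ I) (h0 : 0 ∈ I) {Φ V : ℝ → E → E}
    {c C₀ p : ℝ} (h : IsBiLipschitzDeformation I Φ V c C₀) (hp : p ≤ 0) (b : ℝ) {Ω : Set E} {x : E}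
    (hΩ : Ω ∈ nhds x) :
    (∃ C > 0, ∀ t ∈ I, t ≠ 0 → ∀ y, y ≠ x →
      |rpowDistQuotient b p Φ t x y| ≤ C * ‖x - y‖ ^ p) ∧
    (∃ C > 0, ∀ α ∈ Set.Icc (0 : ℝ) 1, ∀ t ∈ I, t ≠ 0 → ∀ y ∈ Ωᶜ, ∀ z ∈ Ωᶜ, z ≠ y →
      |rpowDistQuotient b p Φ t x y| +
        |rpowDistQuotient b p Φ t x y - rpowDistQuotient b p Φ t x z| / ‖y - z‖ ^ α ≤ C) :=
  ⟨h.exists_abs_rpowDistQuotient_le_mul_rpow hI h0 hp b x,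
    h.exists_abs_rpowDistQuotient_add_holder_le hI h0 hp b hΩ⟩

end InnerProductSpace

/-- Uniform bounds on the difference quotients `g^t_x`:
(i) `|g^t_x(y)| ≤ C |x-y|^{2s-N}`; (ii) uniform Hölder control of `g^t_x` between the
boundary `∂Ω` and the exterior of `Ω`. -/
theorem statement15 (N : ℕ) (hN : 1 ≤ N) (s : ℝ) (hs : s ∈ Set.Ioo (0 : ℝ) 1)
    (hNs : 2 * s < N)
    (Φ V : ℝ → EuclideanSpace ℝ (Fin N) → EuclideanSpace ℝ (Fin N))
    (c : ℝ) (hc : 1 ≤ c) (C₀ : ℝ) (hC₀ : 0 < C₀)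
    (hΦ0 : Φ 0 = id)
    (hlow : ∀ t ∈ Set.Ioo (-(1/2) : ℝ) (1/2), ∀ u v,
      c⁻¹ * ‖u - v‖ ≤ ‖Φ t u - Φ t v‖)
    (hup : ∀ t ∈ Set.Ioo (-(1/2) : ℝ) (1/2), ∀ u v,
      ‖Φ t u - Φ t v‖ ≤ c * ‖u - v‖)
    (hderivt : ∀ x, ∀ t ∈ Set.Ioo (-(1/2) : ℝ) (1/2),
      HasDerivAt (fun τ => Φ τ x) (V t x) t)
    (hVcont : ∀ x, ContinuousOn (fun t => V t x) (Set.Ioo (-(1/2) : ℝ) (1/2)))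
    (hVdiff : ∀ t ∈ Set.Ioo (-(1/2) : ℝ) (1/2), Differentiable ℝ (V t))
    (hVlip : ∀ t ∈ Set.Ioo (-(1/2) : ℝ) (1/2), ∀ u v,
      ‖V t u - V t v‖ ≤ C₀ * ‖u - v‖)
    (hDVbound : ∀ t ∈ Set.Ioo (-(1/2) : ℝ) (1/2), ∀ u, ‖fderiv ℝ (V t) u‖ ≤ C₀)
    (hDVlip : ∀ t ∈ Set.Ioo (-(1/2) : ℝ) (1/2), ∀ u v,
      ‖fderiv ℝ (V t) u - fderiv ℝ (V t) v‖ ≤ C₀ * ‖u - v‖)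
    (Ω : Set (EuclideanSpace ℝ (Fin N))) (hΩo : IsOpen Ω)
    (hΩb : Bornology.IsBounded Ω)
    (x : EuclideanSpace ℝ (Fin N)) (hx : x ∈ Ω) :
    (∃ C > 0, ∀ t ∈ Set.Ioo (-(1/2) : ℝ) (1/2), t ≠ 0 →
        ∀ y : EuclideanSpace ℝ (Fin N), y ≠ x →
          |gtx N s Φ t x y| ≤ C * ‖x - y‖ ^ (2 * s - (N : ℝ))) ∧
    (∀ α ∈ Set.Ioo (0 : ℝ) 1, ∃ C₀' > 0, ∃ t₀ ∈ Set.Ioo (0 : ℝ) (1/2),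
        ∀ t : ℝ, 0 < |t| → |t| < t₀ →
          ∀ y ∈ frontier Ω, ∀ z ∈ Ωᶜ, z ≠ y →
            |gtx N s Φ t x y| +
              |gtx N s Φ t x y - gtx N s Φ t x z| / ‖y - z‖ ^ α ≤ C₀') := by
  have hΦ : IsBiLipschitzDeformation (Set.Ioo (-(1/2) : ℝ) (1/2)) Φ V c C₀ :=
    ⟨by linarith, hC₀.le, hΦ0, hlow, hup, fun u t ht => (hderivt u t ht).hasDerivWithinAt, hVlip⟩
  obtain ⟨hbound, C, hC, hholder⟩ := statement15_general (convex_Ioo _ _) (by norm_num) hΦ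
    (by linarith : 2 * s - (N : ℝ) ≤ 0) (bNs N s) (hΩo.mem_nhds hx)
  exact ⟨hbound, fun α hα => ⟨C, hC, 1 / 4, by norm_num, fun t ht0 ht y hy =>
    hholder α (Set.Ioo_subset_Icc_self hα) t (abs_lt.1 (by linarith)) (abs_pos.1 ht0) y
      (hΩo.frontier_eq ▸ hy).2⟩⟩
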